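/- Hölder-in-δ bound for the boundary trace of E_x: Let T > 0 and let s : [0,T] → ℝ satisfy |s(t) − s(τ)| ≤ |t − τ|^β for all t, τ ∈ [0,T], for some β > α_m/2. Then there exists a constant C > 0 (independent of t and δ) such that for all t ∈ (0,T] and all δ ∈ (0,t), ∫_{t−δ}^{t} |E_x(s(t) − s(τ), t − τ)| dτ ≤ C δ^{β − α_m/2}. -/

import Mathlib

open MeasureTheory Real Filter Set Topology intervalIntegral

/-- The Wright function `W(z; -β, δ) = ∑ z^k/(k! Γ(δ - βk))`, with `1/Γ` the
entire reciprocal Gamma function (here `Real.Gamma` vanishes at nonpositive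
integers, so division gives the correct value `0`). -/
noncomputable def wrightW (β δ z : ℝ) : ℝ :=
  ∑' k : ℕ, z ^ k / (k.factorial * Real.Gamma (δ - β * k))

/-- Laplace convolution on `(0, ∞)`. -/
noncomputable def laplaceConv (f g : ℝ → ℝ) : ℝ → ℝ :=
  fun t => ∫ τ in (0:ℝ)..t, f τ * g (t - τ)

/-- Iterated Laplace convolution `h₀ ∗ h₁ ∗ ⋯ ∗ hₙ`. -/
noncomputable def iterConv : (n : ℕ) → (Fin (n + 1) → ℝ → ℝ) → ℝ → ℝ
  | 0, h => h 0
  | n + 1, h => laplaceConv (iterConv n (fun i => h i.castSucc)) (h (Fin.last (n + 1)))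

/-- `S^μ_m(t; -ℓ₁, …, -ℓ_m; -α₁, …, -α_m)` with the decomposition `μ₁ = μ`,
`μ_j = 0` for `j ≥ 2`: the Laplace convolution of
`h_j(t) = t^{μ_j - 1} W(-ℓ_j t^{-α_j}; -α_j, μ_j)`.  Indices run over
`Fin (n+1)`, i.e. the number of terms is `m = n + 1 ≥ 1`. -/
noncomputable def Sconv (n : ℕ) (μ : ℝ) (α ℓ : Fin (n + 1) → ℝ) : ℝ → ℝ :=
  iterConv n (fun j t =>
    t ^ ((if j = 0 then μ else 0) - 1) *
      wrightW (α j) (if j = 0 then μ else 0) (-(ℓ j) * t ^ (-(α j))))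

/-- `Γ^μ₁(x,t)`. -/
noncomputable def Gam1 (n : ℕ) (α lam : Fin (n + 1) → ℝ) (μ x t : ℝ) : ℝ :=
  (4 * Real.pi) ^ (-(1/2 : ℝ)) *
    ∫ p in Set.Ioi (0:ℝ),
      p ^ (-(1/2 : ℝ)) * Real.exp (-(|x| ^ 2) / (4 * p)) *
        Sconv n μ α (fun j => lam j * p) t

/-- The kernel `E(x,t) = Γ⁰₁(x,t)`. -/
noncomputable def kerE (n : ℕ) (α lam : Fin (n + 1) → ℝ) (x t : ℝ) : ℝ :=
  Gam1 n α lam 0 x t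

/-- `E_x`, the spatial derivative of `E`. -/
noncomputable def kerEx (n : ℕ) (α lam : Fin (n + 1) → ℝ) (x t : ℝ) : ℝ :=
  deriv (fun y => kerE n α lam y t) x

/-- `E_xx`, the second spatial derivative of `E`. -/
noncomputable def kerExx (n : ℕ) (α lam : Fin (n + 1) → ℝ) (x t : ℝ) : ℝ :=
  deriv (fun y => kerEx n α lam y t) x

/-- The kernel `Z(x,t) = ∑ₖ λₖ Γ^{1-αₖ}₁(x,t)`. -/
noncomputable def kerZ (n : ℕ) (α lam : Fin (n + 1) → ℝ) (x t : ℝ) : ℝ :=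
  ∑ k : Fin (n + 1), lam k * Gam1 n α lam (1 - α k) x t

/-- `Z_x`, the spatial derivative of `Z`. -/
noncomputable def kerZx (n : ℕ) (α lam : Fin (n + 1) → ℝ) (x t : ℝ) : ℝ :=
  deriv (fun y => kerZ n α lam y t) x

/-- `Z_xx`, the second spatial derivative of `Z`. -/
noncomputable def kerZxx (n : ℕ) (α lam : Fin (n + 1) → ℝ) (x t : ℝ) : ℝ :=
  deriv (fun y => kerZx n α lam y t) x

/-!
Rotating the contour of the Hankel-type integral representation of `wrightW a 0 (-z)` to a ray
along which both factors of the integrand decay gives `|wrightW a 0 (-z)| ≲ z / (1 + z ^ 2)`; the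
linear decay as `z → 0` comes from `wrightW a 0 0 = 0`. The resulting majorants of the densities
`t⁻¹ W(-ℓ t ^ (-a); -a, 0)` have integrals over `t` bounded independently of `ℓ` and are doubling,
so the iterated Laplace convolution is bounded by a multiple of the sum of the majorants.
Differentiating the Gaussian costs a factor `|x| / p`, and integrating the sum against
`p ^ (-3 / 2)` yields `|E_x(x, t)| ≲ |x| ∑ t ^ (-1 - α_j / 2)`. Along a curve with
`|s t - s τ| ≤ |t - τ| ^ β` the integrand is therefore `O((t - τ) ^ (β - α_m / 2 - 1))`, which is
integrable at `τ = t`.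
-/

/-! ### The Wright function on the negative axis -/

theorem integrableOn_rpow_mul_exp_neg_mul {s c : ℝ} (hs : -1 < s) (hc : 0 < c) :
    IntegrableOn (fun u : ℝ => u ^ s * rexp (-(c * u))) (Ioi 0) := by
  simpa using integrableOn_rpow_mul_exp_neg_mul_rpow hs one_pos hc

theorem norm_cexp_neg_mul_ofReal (w : ℂ) (u : ℝ) :
    ‖Complex.exp (-(w * u))‖ = rexp (-(w.re * u)) := by
  rw [Complex.norm_exp, Complex.neg_re, Complex.re_mul_ofReal]

theorem norm_cexp_sub_one_le_norm_of_re_nonpos {v : ℂ} (hv : v.re ≤ 0) :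
    ‖Complex.exp v - 1‖ ≤ ‖v‖ := by
  have h := (convex_halfSpace_re_le 0).norm_image_sub_le_of_norm_hasDerivWithin_le (C := 1)
    (fun w _ => (Complex.hasDerivAt_exp w).hasDerivWithinAt)
    (fun w (hw : w.re ≤ 0) => by rwa [Complex.norm_exp, Real.exp_le_one_iff])
    (show (0 : ℂ) ∈ {w : ℂ | w.re ≤ 0} by simp) hv
  simpa using h

theorem inv_Gamma_neg {x : ℝ} (hx : -1 < x) :
    (Real.Gamma (-x))⁻¹ = -(Real.Gamma (1 + x) * Real.sin (π * x) / π) := by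
  have reflection := congrArg (·⁻¹) (Real.Gamma_mul_Gamma_one_sub (-x))
  simp only [mul_inv, sub_neg_eq_add, mul_neg, Real.sin_neg, inv_div] at reflection
  have hG : 0 < Real.Gamma (1 + x) := Real.Gamma_pos_of_pos (by linarith)
  field_simp at reflection ⊢
  linarith

theorem differentiableOn_integral_mul_cexp_neg_mul {f : ℝ → ℂ}
    (hf : ∀ r > 0, IntegrableOn (fun u => ‖f u‖ * rexp (-(r * u))) (Ioi 0))
    (hfm : AEStronglyMeasurable f (volume.restrict (Ioi 0))) :
    DifferentiableOn ℂ (fun w : ℂ => ∫ u in Ioi (0 : ℝ), f u * Complex.exp (-(w * u)))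
      {w | 0 < w.re} := by
  intro w (hw : 0 < w.re)
  have hmeas (v : ℂ) : AEStronglyMeasurable (fun u : ℝ => f u * Complex.exp (-(v * u)))
      (volume.restrict (Ioi 0)) := hfm.mul (by fun_prop)
  have hint : IntegrableOn (fun u : ℝ => f u * Complex.exp (-(w * u))) (Ioi 0) :=
    (hf w.re hw).mono' (hmeas w) (ae_of_all _ fun u => by rw [norm_mul, norm_cexp_neg_mul_ofReal])
  refine (hasDerivAt_integral_of_dominated_loc_of_deriv_le
    (F' := fun v u => f u * (Complex.exp (-(v * u)) * (-u)))
    (bound := fun u => ‖f u‖ * rexp (-(w.re / 4 * u)) * (4 / w.re))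
    (Metric.ball_mem_nhds w (half_pos hw)) (Eventually.of_forall hmeas) hint
    (hfm.mul (by fun_prop)) ?_ ((hf _ (by positivity)).mul_const _)
    ?_).2.differentiableAt.differentiableWithinAt
  · filter_upwards [ae_restrict_mem measurableSet_Ioi] with u (hu : 0 < u) v hv
    have hre : w.re / 2 ≤ v.re := by
      have := (Complex.abs_re_le_norm (v - w)).trans (mem_ball_iff_norm.1 hv).le
      rw [Complex.sub_re, abs_le] at this
      linarith
    have hdecay : rexp (-(v.re * u)) ≤ rexp (-(w.re / 4 * u)) * rexp (-(w.re / 4 * u)) := by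
      rw [← Real.exp_add, Real.exp_le_exp]
      nlinarith
    have hlin : rexp (-(w.re / 4 * u)) * u ≤ 4 / w.re := by
      rw [Real.exp_neg, inv_mul_le_iff₀ (Real.exp_pos _), ← div_le_iff₀ (by positivity)]
      calc u / (4 / w.re) = w.re / 4 * u := by field_simp
        _ ≤ _ := by linarith [Real.add_one_le_exp (w.re / 4 * u)]
    rw [norm_mul, norm_mul, norm_cexp_neg_mul_ofReal, norm_neg, Complex.norm_real,
      Real.norm_of_nonneg hu.le, mul_assoc ‖f u‖]
    refine mul_le_mul_of_nonneg_left ?_ (norm_nonneg _)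
    calc rexp (-(v.re * u)) * u
        ≤ rexp (-(w.re / 4 * u)) * (rexp (-(w.re / 4 * u)) * u) := by
          rw [← mul_assoc]; gcongr
      _ ≤ _ := by gcongr
  · refine ae_of_all _ fun u v _ => ?_
    have : HasDerivAt (fun v : ℂ => -(v * u)) (-(u : ℂ)) v := by
      simpa using ((hasDerivAt_id' v).mul_const (u : ℂ)).fun_neg
    exact this.cexp.const_mul _

theorem integral_cpow_mul_cexp_neg_mul_Ioi {a r : ℂ} (ha : 0 < a.re) (hr : 0 < r.re) :
    ∫ u : ℝ in Ioi 0, (u : ℂ) ^ (a - 1) * Complex.exp (-(r * u)) =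
      (1 / r) ^ a * Complex.Gamma a := by
  have hopen : IsOpen {w : ℂ | 0 < w.re} := isOpen_lt continuous_const Complex.continuous_re
  have hL : DifferentiableOn ℂ
      (fun w : ℂ => ∫ u : ℝ in Ioi 0, (u : ℂ) ^ (a - 1) * Complex.exp (-(w * u)))
      {w | 0 < w.re} := by
    refine differentiableOn_integral_mul_cexp_neg_mul (fun r hr => ?_)
      (Measurable.aestronglyMeasurable (by fun_prop))
    refine (integrableOn_rpow_mul_exp_neg_mul (s := a.re - 1) (by linarith) hr).congr_fun
      (fun u (hu : 0 < u) => ?_) measurableSet_Ioi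
    simp [Complex.norm_cpow_eq_rpow_re_of_pos hu]
  have hR : DifferentiableOn ℂ (fun w : ℂ => (1 / w) ^ a * Complex.Gamma a) {w | 0 < w.re} := by
    intro w (hw : 0 < w.re)
    have hw0 : w ≠ 0 := by rintro rfl; simp at hw
    have hslit : 1 / w ∈ Complex.slitPlane := by
      left
      rw [one_div, Complex.inv_re]
      exact div_pos hw (Complex.normSq_pos.2 hw0)
    exact ((((differentiableAt_const 1).div differentiableAt_id hw0).cpow_const
      hslit).mul_const _).differentiableWithinAt
  refine (hL.analyticOnNhd hopen).eqOn_of_preconnected_of_frequently_eq (hR.analyticOnNhd hopen)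
    (convex_halfSpace_re_gt 0).isPreconnected (z₀ := 1) (by simp) ?_ hr
  have hreal : Tendsto (fun x : ℝ => (x : ℂ)) (𝓝[≠] 1) (𝓝[≠] 1) := by
    refine tendsto_nhdsWithin_iff.2 ⟨?_, ?_⟩
    · exact (Complex.continuous_ofReal.tendsto' 1 1 (by simp)).mono_left nhdsWithin_le_nhds
    · filter_upwards [self_mem_nhdsWithin] with x hx
      simpa using hx
  refine hreal.frequently (Eventually.frequently ?_)
  filter_upwards [nhdsWithin_le_nhds (lt_mem_nhds (zero_lt_one (α := ℝ)))] with x hx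
  exact Complex.integral_cpow_mul_exp_neg_mul_Ioi ha hx

theorem integrableOn_exp_neg_mul_mul_exp_mul_rpow {a c : ℝ} (ha : 0 ≤ a) (ha1 : a < 1) (hc : 0 < c)
    (z : ℝ) : IntegrableOn (fun u : ℝ => rexp (-(c * u)) * rexp (z * u ^ a)) (Ioi 0) := by
  have hcont : Continuous fun u : ℝ => rexp (-(c * u)) * rexp (z * u ^ a) := by
    have := Real.continuous_rpow_const ha
    fun_prop
  refine integrable_of_isBigO_exp_neg (half_pos hc) hcont.continuousOn
    (Asymptotics.IsBigO.of_bound 1 ?_)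
  have hlim : Tendsto (fun u : ℝ => z * u ^ (-(1 - a))) atTop (𝓝 0) := by
    simpa using (tendsto_rpow_neg_atTop (sub_pos.2 ha1)).const_mul z
  filter_upwards [hlim.eventually_le_const (half_pos hc), eventually_gt_atTop 0] with u hu hu0
  have hpow : u ^ a = u ^ (-(1 - a)) * u := by
    rw [← Real.rpow_add_one hu0.ne']
    ring_nf
  rw [← Real.exp_add, Real.norm_eq_abs, Real.norm_eq_abs, Real.abs_exp, Real.abs_exp, one_mul,
    Real.exp_le_exp, hpow]
  nlinarith

/-- The direction `exp (-i a π / 2)` of the ray carrying the integral representation of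
`wrightW a 0 (-z)`. On the positive half-line the integrand `exp (-ξ - z * exp (i π a) * ξ ^ a)`
grows exponentially with `z` when `a > 1 / 2`; on this ray both of its factors decay. -/
noncomputable def wrightRay (a : ℝ) : ℂ := Complex.exp ((-(a * π / 2) : ℝ) * Complex.I)

/-- The phase `exp (i π a) * wrightRay a ^ a` which multiplies `z * u ^ a` in the integral
representation of `wrightW a 0 (-z)` along `wrightRay a`. -/
noncomputable def wrightPhase (a : ℝ) : ℂ :=
  Complex.exp ((a * (π - a * π / 2) : ℝ) * Complex.I)

/-- The integrand of the integral representation of `wrightW a 0 (-z)` along `wrightRay a`. -/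
noncomputable def wrightIntegrand (a z u : ℝ) : ℂ :=
  Complex.exp (-(wrightRay a * u)) * Complex.exp (-(z * u ^ a : ℝ) * wrightPhase a)

/-- The `k`-th term of the expansion of `wrightIntegrand a z u` in powers of `z`. -/
noncomputable def wrightIntegrandTerm (a z u : ℝ) (k : ℕ) : ℂ :=
  Complex.exp (-(wrightRay a * u)) * ((-(z * u ^ a : ℝ) * wrightPhase a) ^ k / k.factorial)

theorem hasSum_wrightIntegrandTerm (a z u : ℝ) :
    HasSum (wrightIntegrandTerm a z u) (wrightIntegrand a z u) := by
  refine HasSum.mul_left _ ?_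
  rw [Complex.exp_eq_exp_ℂ]
  exact NormedSpace.expSeries_div_hasSum_exp _

theorem norm_wrightRay (a : ℝ) : ‖wrightRay a‖ = 1 := Complex.norm_exp_ofReal_mul_I _

theorem norm_wrightPhase (a : ℝ) : ‖wrightPhase a‖ = 1 := Complex.norm_exp_ofReal_mul_I _

theorem norm_wrightIntegrand (a z u : ℝ) : ‖wrightIntegrand a z u‖ =
    rexp (-((wrightRay a).re * u)) * rexp (-((wrightPhase a).re * (z * u ^ a))) := by
  rw [wrightIntegrand, norm_mul, norm_cexp_neg_mul_ofReal, neg_mul, mul_comm _ (wrightPhase a),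
    norm_cexp_neg_mul_ofReal]

theorem norm_wrightIntegrandTerm (a z u : ℝ) (k : ℕ) : ‖wrightIntegrandTerm a z u k‖ =
    rexp (-((wrightRay a).re * u)) * (|z * u ^ a| ^ k / k.factorial) := by
  rw [wrightIntegrandTerm, norm_mul, norm_cexp_neg_mul_ofReal, norm_div, norm_pow, norm_mul,
    norm_wrightPhase, norm_neg, Complex.norm_real, mul_one, Real.norm_eq_abs, Complex.norm_natCast]

theorem hasSum_norm_wrightIntegrandTerm (a z u : ℝ) : HasSum (‖wrightIntegrandTerm a z u ·‖)
    (rexp (-((wrightRay a).re * u)) * rexp |z * u ^ a|) := by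
  simp only [norm_wrightIntegrandTerm]
  refine HasSum.mul_left _ ?_
  rw [Real.exp_eq_exp_ℝ]
  exact NormedSpace.expSeries_div_hasSum_exp _

theorem wrightIntegrand_zero (a u : ℝ) :
    wrightIntegrand a 0 u = Complex.exp (-(wrightRay a * u)) := by
  simp [wrightIntegrand]

section WrightIntegral

variable {a : ℝ}

theorem wrightRay_re_pos (ha : 0 < a) (ha1 : a < 1) : 0 < (wrightRay a).re := by
  rw [wrightRay, Complex.exp_ofReal_mul_I_re]
  apply Real.cos_pos_of_mem_Ioo
  constructor <;> nlinarith [Real.pi_pos]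

theorem wrightPhase_re_pos (ha : 0 < a) (ha1 : a < 1) : 0 < (wrightPhase a).re := by
  rw [wrightPhase, Complex.exp_ofReal_mul_I_re]
  apply Real.cos_pos_of_mem_Ioo
  constructor
  · have : 0 < a * (1 - a / 2) * π := mul_pos (mul_pos ha (by linarith)) Real.pi_pos
    nlinarith [Real.pi_pos]
  · nlinarith [mul_pos (pow_pos (sub_pos.2 ha1) 2) Real.pi_pos]

theorem one_div_wrightRay_cpow (ha : 0 < a) (ha1 : a < 1) (b : ℂ) :
    (1 / wrightRay a) ^ b = Complex.exp (a * π / 2 * b * Complex.I) := by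
  have hinv : 1 / wrightRay a = Complex.exp (a * π / 2 * Complex.I) := by
    rw [wrightRay, one_div, ← Complex.exp_neg]
    push_cast
    ring_nf
  rw [hinv, Complex.cpow_def_of_ne_zero (Complex.exp_ne_zero _), Complex.log_exp]
  · ring_nf
  · simp; nlinarith [Real.pi_pos]
  · simp; nlinarith [Real.pi_pos]

theorem wrightRay_mul_wrightPhase_pow_mul_integral (ha : 0 < a) (ha1 : a < 1) (k : ℕ) :
    wrightRay a * (wrightPhase a ^ k *
        ∫ u : ℝ in Ioi 0, (u ^ (a * k) : ℝ) * Complex.exp (-(wrightRay a * u))) =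
      Real.Gamma (1 + a * k) * Complex.exp ((π * (a * k) : ℝ) * Complex.I) := by
  have hk : 0 < ((1 + a * k : ℝ) : ℂ).re := by rw [Complex.ofReal_re]; positivity
  have hint : ∫ u : ℝ in Ioi 0, (u ^ (a * k) : ℝ) * Complex.exp (-(wrightRay a * u)) =
      Complex.exp (a * π / 2 * (1 + a * k) * Complex.I) * Real.Gamma (1 + a * k) := by
    have h := integral_cpow_mul_cexp_neg_mul_Ioi hk (wrightRay_re_pos ha ha1)
    rw [one_div_wrightRay_cpow ha ha1, Complex.Gamma_ofReal] at h
    push_cast at h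
    rw [← h]
    refine setIntegral_congr_fun measurableSet_Ioi fun u (hu : 0 < u) => ?_
    simp [Complex.ofReal_cpow hu.le]
  have hphase : wrightRay a * wrightPhase a ^ k *
      Complex.exp (a * π / 2 * (1 + a * k) * Complex.I) =
        Complex.exp ((π * (a * k) : ℝ) * Complex.I) := by
    rw [wrightRay, wrightPhase, ← Complex.exp_nat_mul, ← Complex.exp_add, ← Complex.exp_add]
    push_cast
    ring_nf
  rw [hint, ← hphase]
  ring

theorem wrightW_term_eq (ha : 0 < a) (ha1 : a < 1) (z : ℝ) (k : ℕ) :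
    (-z) ^ k / (k.factorial * Real.Gamma (0 - a * k)) =
      -(wrightRay a * ∫ u in Ioi (0 : ℝ), wrightIntegrandTerm a z u k).im / π := by
  have hak : 0 ≤ a * k := by positivity
  have hint : ∫ u in Ioi (0 : ℝ), wrightIntegrandTerm a z u k =
      ((-z) ^ k / k.factorial : ℝ) * (wrightPhase a ^ k *
        ∫ u : ℝ in Ioi 0, (u ^ (a * k) : ℝ) * Complex.exp (-(wrightRay a * u))) := by
    rw [← MeasureTheory.integral_const_mul, ← MeasureTheory.integral_const_mul]
    refine setIntegral_congr_fun measurableSet_Ioi fun u (hu : 0 < u) => ?_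
    rw [wrightIntegrandTerm, Real.rpow_mul hu.le, Real.rpow_natCast, ← Complex.ofReal_neg,
      ← neg_mul, mul_pow]
    push_cast
    ring
  rw [hint, mul_left_comm, wrightRay_mul_wrightPhase_pow_mul_integral ha ha1,
    Complex.im_ofReal_mul, Complex.im_ofReal_mul, Complex.exp_ofReal_mul_I_im, zero_sub,
    div_mul_eq_div_div, div_eq_mul_inv _ (Real.Gamma _), inv_Gamma_neg (by linarith)]
  ring

theorem continuous_uncurry_wrightIntegrand (ha : 0 ≤ a) :
    Continuous (Function.uncurry (wrightIntegrand a)) := by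
  have := Real.continuous_rpow_const ha
  unfold wrightIntegrand Function.uncurry
  fun_prop

theorem integrableOn_wrightIntegrand (ha : 0 < a) (ha1 : a < 1) (z : ℝ) :
    IntegrableOn (wrightIntegrand a z) (Ioi 0) := by
  refine Integrable.mono' (integrableOn_exp_neg_mul_mul_exp_mul_rpow ha.le ha1
      (wrightRay_re_pos ha ha1) (-((wrightPhase a).re * z)))
    ((continuous_uncurry_wrightIntegrand ha.le).uncurry_left z).aestronglyMeasurable
    (ae_of_all _ fun u => ?_)
  rw [norm_wrightIntegrand, neg_mul, mul_assoc]

theorem wrightW_neg_eq_integral (ha : 0 < a) (ha1 : a < 1) (z : ℝ) :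
    wrightW a 0 (-z) = -(wrightRay a * ∫ u in Ioi (0 : ℝ), wrightIntegrand a z u).im / π := by
  have hcont : Continuous fun u : ℝ => u ^ a := Real.continuous_rpow_const ha.le
  have hsum : HasSum (fun k => ∫ u in Ioi (0 : ℝ), wrightIntegrandTerm a z u k)
      (∫ u in Ioi (0 : ℝ), wrightIntegrand a z u) := by
    refine hasSum_integral_of_dominated_convergence (fun k u => ‖wrightIntegrandTerm a z u k‖)
      (fun k => Continuous.aestronglyMeasurable (by unfold wrightIntegrandTerm; fun_prop))
      (fun k => ae_of_all _ fun u => le_rfl)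
      (ae_of_all _ fun u => (hasSum_norm_wrightIntegrandTerm a z u).summable) ?_
      (ae_of_all _ (hasSum_wrightIntegrandTerm a z))
    refine (integrableOn_exp_neg_mul_mul_exp_mul_rpow ha.le ha1 (wrightRay_re_pos ha ha1)
      |z|).congr_fun (fun u (hu : 0 < u) => ?_) measurableSet_Ioi
    rw [(hasSum_norm_wrightIntegrandTerm a z u).tsum_eq, abs_mul,
      abs_of_nonneg (Real.rpow_nonneg hu.le a)]
  rw [wrightW, tsum_congr (wrightW_term_eq ha ha1 z)]
  exact ((Complex.hasSum_im (hsum.mul_left _)).neg.div_const π).tsum_eq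

theorem measurable_wrightW_zero (ha : 0 < a) (ha1 : a < 1) : Measurable (wrightW a 0) := by
  have hint : Measurable fun z => ∫ u in Ioi (0 : ℝ), wrightIntegrand a z u :=
    (continuous_uncurry_wrightIntegrand ha.le).stronglyMeasurable.integral_prod_right.measurable
  have hneg : Measurable fun z => wrightW a 0 (-z) := by
    simp only [wrightW_neg_eq_integral ha ha1]
    fun_prop
  simpa [Function.comp_def] using hneg.comp measurable_neg

theorem wrightW_zero_zero (a : ℝ) : wrightW a 0 0 = 0 := by
  rw [wrightW, tsum_eq_single 0 fun k hk => by simp [hk]]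
  simp [Real.Gamma_zero]

theorem abs_neg_im_wrightRay_mul_div_pi_le (a : ℝ) (v : ℂ) :
    |-(wrightRay a * v).im / π| ≤ ‖v‖ := by
  have him : |(wrightRay a * v).im| ≤ ‖v‖ :=
    (Complex.abs_im_le_norm _).trans_eq (by rw [norm_mul, norm_wrightRay, one_mul])
  rw [abs_div, abs_neg, abs_of_pos Real.pi_pos]
  exact (div_le_self (abs_nonneg _) (by linarith [Real.pi_gt_three])).trans him

theorem exists_abs_wrightW_neg_le_div (ha : 0 < a) (ha1 : a < 1) :
    ∃ B ≥ 0, ∀ z > 0, |wrightW a 0 (-z)| ≤ B / z := by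
  have hc := wrightRay_re_pos ha ha1
  have hd := wrightPhase_re_pos ha ha1
  set c := (wrightRay a).re
  set d := (wrightPhase a).re
  refine ⟨∫ u in Ioi (0 : ℝ), u ^ (-a) * rexp (-(c * u)) / d,
    setIntegral_nonneg measurableSet_Ioi fun u (hu : 0 < u) => by positivity, fun z hz => ?_⟩
  rw [wrightW_neg_eq_integral ha ha1, ← MeasureTheory.integral_div]
  refine (abs_neg_im_wrightRay_mul_div_pi_le a _).trans (norm_integral_le_of_norm_le
    (((integrableOn_rpow_mul_exp_neg_mul (by linarith) hc).div_const d).div_const z) ?_)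
  filter_upwards [ae_restrict_mem measurableSet_Ioi] with u (hu : 0 < u)
  have hv : 0 < d * (z * u ^ a) := by positivity
  have hexp : rexp (-(d * (z * u ^ a))) ≤ (d * (z * u ^ a))⁻¹ := by
    rw [Real.exp_neg]
    exact inv_anti₀ hv (by linarith [Real.add_one_le_exp (d * (z * u ^ a))])
  calc ‖wrightIntegrand a z u‖
      = rexp (-(c * u)) * rexp (-(d * (z * u ^ a))) := norm_wrightIntegrand a z u
    _ ≤ rexp (-(c * u)) * (d * (z * u ^ a))⁻¹ := by gcongr
    _ = u ^ (-a) * rexp (-(c * u)) / d / z := by rw [Real.rpow_neg hu.le]; field_simp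

theorem norm_wrightIntegrand_sub_wrightIntegrand_zero_le {z u : ℝ} (hre : 0 ≤ (wrightPhase a).re)
    (hz : 0 ≤ z) (hu : 0 ≤ u) : ‖wrightIntegrand a z u - wrightIntegrand a 0 u‖ ≤
      u ^ a * rexp (-((wrightRay a).re * u)) * z := by
  have hzu : 0 ≤ z * u ^ a := by positivity
  set v : ℂ := -(z * u ^ a : ℝ) * wrightPhase a with hv
  have hnorm : ‖v‖ = z * u ^ a := by
    rw [hv, norm_mul, norm_wrightPhase, norm_neg, Complex.norm_real, mul_one,
      Real.norm_of_nonneg hzu]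
  have hvre : v.re ≤ 0 := by
    rw [hv, neg_mul, Complex.neg_re, Complex.re_ofReal_mul, neg_nonpos]
    exact mul_nonneg hzu hre
  calc ‖wrightIntegrand a z u - wrightIntegrand a 0 u‖
      = rexp (-((wrightRay a).re * u)) * ‖Complex.exp v - 1‖ := by
        rw [wrightIntegrand_zero, wrightIntegrand, ← hv, ← mul_sub_one, norm_mul,
          norm_cexp_neg_mul_ofReal]
    _ ≤ rexp (-((wrightRay a).re * u)) * (z * u ^ a) := by
        rw [← hnorm]
        gcongr
        exact norm_cexp_sub_one_le_norm_of_re_nonpos hvre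
    _ = _ := by ring

theorem exists_abs_wrightW_neg_le_mul (ha : 0 < a) (ha1 : a < 1) :
    ∃ B ≥ 0, ∀ z > 0, |wrightW a 0 (-z)| ≤ B * z := by
  refine ⟨∫ u in Ioi (0 : ℝ), u ^ a * rexp (-((wrightRay a).re * u)),
    setIntegral_nonneg measurableSet_Ioi fun u (hu : 0 < u) => by positivity, fun z hz => ?_⟩
  have hdiff : wrightW a 0 (-z) = -(wrightRay a *
      ∫ u in Ioi (0 : ℝ), (wrightIntegrand a z u - wrightIntegrand a 0 u)).im / π := by
    have h0 := wrightW_neg_eq_integral ha ha1 0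
    rw [neg_zero, wrightW_zero_zero] at h0
    rw [integral_sub (integrableOn_wrightIntegrand ha ha1 z)
      (integrableOn_wrightIntegrand ha ha1 0), mul_sub, Complex.sub_im, neg_sub', sub_div, ← h0,
      sub_zero, wrightW_neg_eq_integral ha ha1]
  rw [hdiff, ← MeasureTheory.integral_mul_const]
  refine (abs_neg_im_wrightRay_mul_div_pi_le a _).trans (norm_integral_le_of_norm_le
    ((integrableOn_rpow_mul_exp_neg_mul (by linarith) (wrightRay_re_pos ha ha1)).mul_const z) ?_)
  filter_upwards [ae_restrict_mem measurableSet_Ioi] with u (hu : 0 < u)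
  exact norm_wrightIntegrand_sub_wrightIntegrand_zero_le (wrightPhase_re_pos ha ha1).le hz.le hu.le

theorem exists_abs_wrightW_neg_le (ha : 0 < a) (ha1 : a < 1) :
    ∃ A ≥ 0, ∀ z > 0, |wrightW a 0 (-z)| ≤ A * (z / (1 + z ^ 2)) := by
  obtain ⟨B₀, hB₀, hsmall⟩ := exists_abs_wrightW_neg_le_mul ha ha1
  obtain ⟨B₁, hB₁, hlarge⟩ := exists_abs_wrightW_neg_le_div ha ha1
  refine ⟨B₀ + B₁, by positivity, fun z hz => ?_⟩
  have hlarge := (le_div_iff₀ hz).1 (hlarge z hz)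
  rw [← mul_div_assoc, le_div_iff₀ (by positivity)]
  nlinarith [hsmall z hz]

end WrightIntegral

/-! ### Convolutions of doubling functions -/

/-- `F` is nonnegative and integrable on `(0, ∞)` with integral at most `M`, and its values on
`[t / 2, t]` are at most `K` times its value at `t`. Up to constants, the Laplace convolution of two
such functions is bounded by their sum, which is again such a function. -/
structure IsConvMajorant (M K : ℝ) (F : ℝ → ℝ) : Prop where
  nonneg : ∀ t > 0, 0 ≤ F t
  integrableOn : IntegrableOn F (Ioi 0)
  integral_le : ∫ t in Ioi (0 : ℝ), F t ≤ M
  doubling : ∀ t > 0, ∀ τ ∈ Icc (t / 2) t, F τ ≤ K * F t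

namespace IsConvMajorant

variable {M M' K : ℝ} {F G : ℝ → ℝ}

theorem const_mul (hF : IsConvMajorant M K F) {c : ℝ} (hc : 0 ≤ c) :
    IsConvMajorant (c * M) K fun t => c * F t where
  nonneg t ht := mul_nonneg hc (hF.nonneg t ht)
  integrableOn := hF.integrableOn.const_mul c
  integral_le := by
    rw [MeasureTheory.integral_const_mul]
    exact mul_le_mul_of_nonneg_left hF.integral_le hc
  doubling t ht τ hτ := by
    rw [mul_left_comm]
    exact mul_le_mul_of_nonneg_left (hF.doubling t ht τ hτ) hc

theorem mono (hF : IsConvMajorant M K F) (hM : M ≤ M') : IsConvMajorant M' K F :=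
  ⟨hF.nonneg, hF.integrableOn, hF.integral_le.trans hM, hF.doubling⟩

theorem sum {ι : Type*} [Fintype ι] {F : ι → ℝ → ℝ} (hF : ∀ i, IsConvMajorant M K (F i)) :
    IsConvMajorant (Fintype.card ι * M) K fun t => ∑ i, F i t where
  nonneg t ht := Finset.sum_nonneg fun i _ => (hF i).nonneg t ht
  integrableOn := integrable_finsetSum _ fun i _ => (hF i).integrableOn
  integral_le := by
    rw [MeasureTheory.integral_finsetSum _ fun i _ => (hF i).integrableOn]
    exact (Finset.sum_le_sum fun i _ => (hF i).integral_le).trans_eq (by simp)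
  doubling t ht τ hτ := by
    rw [Finset.mul_sum]
    exact Finset.sum_le_sum fun i _ => (hF i).doubling t ht τ hτ

theorem intervalIntegral_le (hF : IsConvMajorant M K F) {t : ℝ} (ht : 0 < t) :
    ∫ τ in (0 : ℝ)..t, F τ ≤ M := by
  rw [intervalIntegral.integral_of_le ht.le]
  refine (setIntegral_mono_set hF.integrableOn ?_ Ioc_subset_Ioi_self.eventuallyLE).trans
    hF.integral_le
  filter_upwards [ae_restrict_mem measurableSet_Ioi] with u hu using hF.nonneg u hu

theorem intervalIntegrable (hF : IsConvMajorant M K F) {t : ℝ} (ht : 0 < t) :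
    IntervalIntegrable F volume 0 t :=
  (intervalIntegrable_iff_integrableOn_Ioc_of_le ht.le).2
    (hF.integrableOn.mono_set Ioc_subset_Ioi_self)

-- One of `τ` and `t - τ` lies in `[t / 2, t]`.
theorem mul_comp_sub_le (hK : 0 ≤ K) (hF : IsConvMajorant M K F) (hG : IsConvMajorant M' K G)
    {t τ : ℝ} (hτ : τ ∈ Ioo 0 t) : F τ * G (t - τ) ≤ K * F t * G (t - τ) + K * G t * F τ := by
  have ht : 0 < t := hτ.1.trans hτ.2
  have hFt := hF.nonneg t ht
  have hGt := hG.nonneg t ht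
  have hFτ := hF.nonneg τ hτ.1
  have hGτ := hG.nonneg (t - τ) (sub_pos.2 hτ.2)
  rcases le_total (t / 2) τ with h | h
  · have := mul_le_mul_of_nonneg_right (hF.doubling t ht τ ⟨h, hτ.2.le⟩) hGτ
    have : 0 ≤ K * G t * F τ := by positivity
    linarith
  · have := mul_le_mul_of_nonneg_left
      (hG.doubling t ht (t - τ) ⟨by linarith, by linarith [hτ.1]⟩) hFτ
    have : 0 ≤ K * F t * G (t - τ) := by positivity
    linarith

theorem abs_laplaceConv_le (hK : 0 ≤ K) (hF : IsConvMajorant M K F) (hG : IsConvMajorant M' K G)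
    {f g : ℝ → ℝ} (hf : ∀ t > 0, |f t| ≤ F t) (hg : ∀ t > 0, |g t| ≤ G t) {t : ℝ} (ht : 0 < t) :
    |laplaceConv f g t| ≤ K * M' * F t + K * M * G t := by
  have hGr : IntervalIntegrable (fun τ => G (t - τ)) volume 0 t := by
    simpa using ((hG.intervalIntegrable ht).comp_sub_left t).symm
  have hFr := hF.intervalIntegrable ht
  have hbound : |laplaceConv f g t| ≤ ∫ τ in (0 : ℝ)..t, K * F t * G (t - τ) + K * G t * F τ := by
    rw [laplaceConv, ← Real.norm_eq_abs]
    refine intervalIntegral.norm_integral_le_of_norm_le ht.le ?_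
      ((hGr.const_mul _).add (hFr.const_mul _))
    filter_upwards [Measure.ae_ne volume t] with τ hτt hτ
    have hτ' : τ ∈ Ioo 0 t := ⟨hτ.1, lt_of_le_of_ne hτ.2 hτt⟩
    rw [norm_mul, Real.norm_eq_abs, Real.norm_eq_abs]
    exact (mul_le_mul (hf τ hτ'.1) (hg _ (sub_pos.2 hτ'.2)) (abs_nonneg _)
      (hF.nonneg τ hτ'.1)).trans (mul_comp_sub_le hK hF hG hτ')
  calc |laplaceConv f g t|
      ≤ K * F t * (∫ τ in (0 : ℝ)..t, G τ) + K * G t * ∫ τ in (0 : ℝ)..t, F τ := by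
        rwa [intervalIntegral.integral_add (hGr.const_mul _) (hFr.const_mul _),
          intervalIntegral.integral_const_mul, intervalIntegral.integral_const_mul,
          intervalIntegral.integral_comp_sub_left, sub_self, sub_zero] at hbound
    _ ≤ K * F t * M' + K * G t * M := by
        have := hF.nonneg t ht
        have := hG.nonneg t ht
        gcongr
        · exact hG.intervalIntegral_le ht
        · exact hF.intervalIntegral_le ht
    _ = _ := by ring

theorem exists_abs_iterConv_le (hM : 0 ≤ M) (hK : 0 ≤ K) (n : ℕ) :
    ∃ C ≥ 0, ∀ h F : Fin (n + 1) → ℝ → ℝ, (∀ j, IsConvMajorant M K (F j)) →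
      (∀ j, ∀ t > 0, |h j t| ≤ F j t) → ∀ t > 0, |iterConv n h t| ≤ C * ∑ j, F j t := by
  induction n with
  | zero =>
    refine ⟨1, zero_le_one, fun h F _ hb t ht => ?_⟩
    simpa [iterConv] using hb 0 t ht
  | succ n ih =>
    obtain ⟨C, hC, ih⟩ := ih
    refine ⟨K * M * C + K * (C * ((n + 1) * M)), by positivity, fun h F hF hb t ht => ?_⟩
    have hsum : IsConvMajorant (C * ((n + 1) * M)) K fun t => C * ∑ i : Fin (n + 1),
        F i.castSucc t := by
      simpa using (IsConvMajorant.sum fun i : Fin (n + 1) => hF i.castSucc).const_mul hC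
    have hinit : 0 ≤ ∑ i : Fin (n + 1), F i.castSucc t :=
      Finset.sum_nonneg fun i _ => (hF _).nonneg t ht
    have hlast := (hF (Fin.last (n + 1))).nonneg t ht
    rw [Fin.sum_univ_castSucc]
    calc |iterConv (n + 1) h t|
        ≤ K * M * (C * ∑ i : Fin (n + 1), F i.castSucc t) +
            K * (C * ((n + 1) * M)) * F (Fin.last (n + 1)) t :=
          abs_laplaceConv_le hK hsum (hF (Fin.last (n + 1)))
            (ih _ _ (fun i => hF i.castSucc) fun i => hb i.castSucc) (hb (Fin.last (n + 1))) ht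
      _ ≤ K * M * (C * ∑ i : Fin (n + 1), F i.castSucc t) +
            K * (C * ((n + 1) * M)) * F (Fin.last (n + 1)) t +
          (K * (C * ((n + 1) * M)) * (∑ i : Fin (n + 1), F i.castSucc t) +
            K * M * C * F (Fin.last (n + 1)) t) := le_add_of_nonneg_right (by positivity)
      _ = _ := by ring

end IsConvMajorant

section Measurability

variable {P : Type*} [MeasurableSpace P]

theorem measurable_uncurry_laplaceConv {f g : P → ℝ → ℝ} (hf : Measurable (Function.uncurry f))
    (hg : Measurable (Function.uncurry g)) :
    Measurable (Function.uncurry fun p => laplaceConv (f p) (g p)) := by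
  have hint (S : Set ((P × ℝ) × ℝ)) (hS : MeasurableSet S) :
      Measurable fun x : P × ℝ => ∫ τ,
        S.indicator (fun y => f y.1.1 y.2 * g y.1.1 (y.1.2 - y.2)) (x, τ) := by
    have hfy : Measurable fun y : (P × ℝ) × ℝ => f y.1.1 y.2 :=
      hf.comp (f := fun y : (P × ℝ) × ℝ => (y.1.1, y.2)) (by fun_prop)
    have hgy : Measurable fun y : (P × ℝ) × ℝ => g y.1.1 (y.1.2 - y.2) :=
      hg.comp (f := fun y : (P × ℝ) × ℝ => (y.1.1, y.1.2 - y.2)) (by fun_prop)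
    exact ((hfy.mul hgy).indicator hS).stronglyMeasurable.integral_prod_right'.measurable
  have hforward : MeasurableSet {y : (P × ℝ) × ℝ | 0 < y.2 ∧ y.2 ≤ y.1.2} :=
    (measurableSet_lt measurable_const measurable_snd).inter
      (measurableSet_le measurable_snd measurable_fst.snd)
  have hbackward : MeasurableSet {y : (P × ℝ) × ℝ | y.1.2 < y.2 ∧ y.2 ≤ 0} :=
    (measurableSet_lt measurable_fst.snd measurable_snd).inter
      (measurableSet_le measurable_snd measurable_const)
  have hsplit : (Function.uncurry fun p => laplaceConv (f p) (g p)) = fun x =>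
      (∫ τ in Ioc 0 x.2, f x.1 τ * g x.1 (x.2 - τ)) -
        ∫ τ in Ioc x.2 0, f x.1 τ * g x.1 (x.2 - τ) := rfl
  simp only [hsplit, ← MeasureTheory.integral_indicator measurableSet_Ioc]
  exact (hint _ hforward).sub (hint _ hbackward)

theorem measurable_uncurry_iterConv {n : ℕ} {h : P → Fin (n + 1) → ℝ → ℝ}
    (hh : ∀ j, Measurable (Function.uncurry fun p => h p j)) :
    Measurable (Function.uncurry fun p => iterConv n (h p)) := by
  induction n with
  | zero => exact hh 0
  | succ n ih => exact measurable_uncurry_laplaceConv (ih fun j => hh j.castSucc) (hh _)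

end Measurability

/-! ### The majorant of the Wright density -/

/-- The majorant, up to constants, of `t⁻¹ * wrightW a 0 (-b * t ^ (-a))`. -/
noncomputable def wrightMajorant (a b t : ℝ) : ℝ :=
  t⁻¹ * (b * t ^ (-a) / (1 + (b * t ^ (-a)) ^ 2))

section WrightMajorant

variable {a b t : ℝ}

theorem wrightMajorant_nonneg (a : ℝ) (hb : 0 < b) (ht : 0 < t) : 0 ≤ wrightMajorant a b t := by
  unfold wrightMajorant
  positivity

theorem wrightMajorant_eq_smul (ha : 0 < a) (b : ℝ) (ht : 0 < t) :
    wrightMajorant a b t = a⁻¹ * ((|-a| * t ^ (-a - 1)) • (b * (1 + (b * t ^ (-a)) ^ 2)⁻¹)) := by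
  rw [wrightMajorant, abs_neg, abs_of_pos ha, smul_eq_mul, Real.rpow_sub_one ht.ne']
  field_simp

theorem integrableOn_wrightMajorant (ha : 0 < a) (hb : b ≠ 0) :
    IntegrableOn (wrightMajorant a b) (Ioi 0) := by
  have hcauchy : IntegrableOn (fun y : ℝ => b * (1 + (b * y) ^ 2)⁻¹) (Ioi 0) :=
    ((integrable_inv_one_add_sq.comp_mul_left' hb).const_mul b).integrableOn
  have hsubst := (integrableOn_Ioi_comp_rpow_iff _ (neg_ne_zero.2 ha.ne')).2 hcauchy
  exact IntegrableOn.congr_fun (hsubst.const_mul a⁻¹)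
    (fun t ht => (wrightMajorant_eq_smul ha b ht).symm) measurableSet_Ioi

theorem integral_wrightMajorant (ha : 0 < a) (hb : 0 < b) :
    ∫ t in Ioi (0 : ℝ), wrightMajorant a b t = a⁻¹ * (π / 2) := by
  rw [setIntegral_congr_fun measurableSet_Ioi fun t ht => wrightMajorant_eq_smul ha b ht,
    MeasureTheory.integral_const_mul,
    integral_comp_rpow_Ioi (fun y : ℝ => b * (1 + (b * y) ^ 2)⁻¹) (neg_ne_zero.2 ha.ne'),
    MeasureTheory.integral_const_mul,
    integral_comp_mul_left_Ioi (fun y : ℝ => (1 + y ^ 2)⁻¹) 0 hb, smul_eq_mul,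
    mul_inv_cancel_left₀ hb.ne', mul_zero, integral_Ioi_inv_one_add_sq, Real.arctan_zero, sub_zero]

theorem rpow_neg_le_two_mul_of_half_le (ha : 0 ≤ a) (ha1 : a ≤ 1) (ht : 0 < t) {τ : ℝ}
    (hτ : t / 2 ≤ τ) : τ ^ (-a) ≤ 2 * t ^ (-a) :=
  calc τ ^ (-a) ≤ (t / 2) ^ (-a) :=
        Real.rpow_le_rpow_of_nonpos (half_pos ht) hτ (neg_nonpos.2 ha)
    _ = 2 ^ a * t ^ (-a) := by
        rw [Real.div_rpow ht.le zero_le_two, Real.rpow_neg zero_le_two, div_inv_eq_mul, mul_comm]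
    _ ≤ 2 * t ^ (-a) := by
        gcongr
        exact Real.rpow_le_self_of_one_le one_le_two ha1

theorem wrightMajorant_le_four_mul (ha : 0 ≤ a) (ha1 : a ≤ 1) (hb : 0 < b) (ht : 0 < t) {τ : ℝ}
    (hτ : τ ∈ Icc (t / 2) t) : wrightMajorant a b τ ≤ 4 * wrightMajorant a b t := by
  have hτ0 : 0 < τ := (half_pos ht).trans_le hτ.1
  have hinv : τ⁻¹ ≤ 2 * t⁻¹ := by
    simpa [div_eq_mul_inv, mul_comm] using inv_anti₀ (half_pos ht) hτ.1
  have hlower : t ^ (-a) ≤ τ ^ (-a) := Real.rpow_le_rpow_of_nonpos hτ0 hτ.2 (neg_nonpos.2 ha)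
  calc wrightMajorant a b τ
      ≤ 2 * t⁻¹ * (b * (2 * t ^ (-a)) / (1 + (b * t ^ (-a)) ^ 2)) := by
        unfold wrightMajorant
        gcongr
        exact rpow_neg_le_two_mul_of_half_le ha ha1 ht hτ.1
    _ = 4 * wrightMajorant a b t := by
        unfold wrightMajorant
        ring

theorem isConvMajorant_wrightMajorant (ha : 0 < a) (ha1 : a ≤ 1) (hb : 0 < b) :
    IsConvMajorant (a⁻¹ * (π / 2)) 4 (wrightMajorant a b) where
  nonneg _ ht := wrightMajorant_nonneg a hb ht
  integrableOn := integrableOn_wrightMajorant ha hb.ne'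
  integral_le := (integral_wrightMajorant ha hb).le
  doubling _ ht _ hτ := wrightMajorant_le_four_mul ha.le ha1 hb ht hτ

theorem integrableOn_rpow_mul_inv_one_add_sq {s : ℝ} (hs : -1 < s) (hs1 : s < 1) :
    IntegrableOn (fun q : ℝ => q ^ s * (1 + q ^ 2)⁻¹) (Ioi 0) := by
  have hmeas (S : Set ℝ) :
      AEStronglyMeasurable (fun q : ℝ => q ^ s * (1 + q ^ 2)⁻¹) (volume.restrict S) :=
    Measurable.aestronglyMeasurable (by fun_prop)
  rw [← Ioc_union_Ioi_eq_Ioi zero_le_one]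
  refine IntegrableOn.union ?_ ?_
  · refine Integrable.mono' ((intervalIntegrable_iff_integrableOn_Ioc_of_le zero_le_one).1
      (intervalIntegral.intervalIntegrable_rpow' hs)) (hmeas _) ?_
    filter_upwards [ae_restrict_mem measurableSet_Ioc] with q hq
    have hq0 : 0 < q := hq.1
    rw [Real.norm_of_nonneg (by positivity)]
    exact mul_le_of_le_one_right (by positivity) (inv_le_one_of_one_le₀ (by nlinarith))
  · refine Integrable.mono' (integrableOn_Ioi_rpow_of_lt (by linarith : s - 2 < -1) one_pos)
      (hmeas _) ?_
    filter_upwards [ae_restrict_mem measurableSet_Ioi] with q (hq : 1 < q)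
    have hq0 : 0 < q := one_pos.trans hq
    rw [Real.norm_of_nonneg (by positivity), Real.rpow_sub hq0, Real.rpow_two, div_eq_mul_inv]
    gcongr
    exact le_add_of_nonneg_left zero_le_one

theorem rpow_mul_wrightMajorant_eq (s a : ℝ) {l p : ℝ} (hl : 0 < l) (ht : 0 < t) (hp : 0 < p) :
    p ^ s * wrightMajorant a (l * p) t = t⁻¹ * (l * t ^ (-a)) ^ (-s) *
      ((l * t ^ (-a) * p) ^ (s + 1) * (1 + (l * t ^ (-a) * p) ^ 2)⁻¹) := by
  have hc : 0 < l * t ^ (-a) := by positivity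
  have := Real.rpow_pos_of_pos hc s
  rw [wrightMajorant, mul_right_comm l p, Real.rpow_add_one (by positivity),
    Real.mul_rpow hc.le hp.le, Real.rpow_neg hc.le]
  field_simp

theorem integrableOn_rpow_mul_wrightMajorant {s : ℝ} (hs : -2 < s) (hs0 : s < 0) (a : ℝ) {l : ℝ}
    (hl : 0 < l) (ht : 0 < t) :
    IntegrableOn (fun p => p ^ s * wrightMajorant a (l * p) t) (Ioi 0) := by
  have hc : 0 < l * t ^ (-a) := by positivity
  have hscale := (integrableOn_Ioi_comp_mul_left_iff
    (fun q : ℝ => q ^ (s + 1) * (1 + q ^ 2)⁻¹) 0 hc).2 (by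
      rw [mul_zero]
      exact integrableOn_rpow_mul_inv_one_add_sq (by linarith) (by linarith))
  exact IntegrableOn.congr_fun (hscale.const_mul (t⁻¹ * (l * t ^ (-a)) ^ (-s)))
    (fun p hp => (rpow_mul_wrightMajorant_eq s a hl ht hp).symm) measurableSet_Ioi

theorem integral_rpow_mul_wrightMajorant (s a : ℝ) {l : ℝ} (hl : 0 < l) (ht : 0 < t) :
    ∫ p in Ioi (0 : ℝ), p ^ s * wrightMajorant a (l * p) t =
      t⁻¹ * (l * t ^ (-a)) ^ (-s - 1) * ∫ q in Ioi (0 : ℝ), q ^ (s + 1) * (1 + q ^ 2)⁻¹ := by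
  have hc : 0 < l * t ^ (-a) := by positivity
  rw [setIntegral_congr_fun measurableSet_Ioi fun p hp => rpow_mul_wrightMajorant_eq s a hl ht hp,
    MeasureTheory.integral_const_mul,
    integral_comp_mul_left_Ioi (fun q : ℝ => q ^ (s + 1) * (1 + q ^ 2)⁻¹) 0 hc, mul_zero,
    smul_eq_mul, Real.rpow_sub_one hc.ne']
  ring

end WrightMajorant

/-! ### The kernel and its spatial derivative -/

theorem exp_neg_sq_div_le_one (x : ℝ) {p : ℝ} (hp : 0 ≤ p) : rexp (-x ^ 2 / (4 * p)) ≤ 1 :=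
  Real.exp_le_one_iff.2
    (div_nonpos_of_nonpos_of_nonneg (neg_nonpos.2 (sq_nonneg x)) (mul_nonneg zero_le_four hp))

theorem abs_integral_exp_neg_sq_div_mul_le {f : ℝ → ℝ} (hf : IntegrableOn f (Ioi 0)) (x : ℝ) :
    |∫ p in Ioi (0 : ℝ), rexp (-x ^ 2 / (4 * p)) * f p| ≤ ∫ p in Ioi (0 : ℝ), |f p| := by
  rw [← Real.norm_eq_abs]
  refine norm_integral_le_of_norm_le hf.abs
    (ae_restrict_of_forall_mem measurableSet_Ioi fun p (hp : 0 < p) => ?_)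
  rw [norm_mul, Real.norm_eq_abs, Real.abs_exp, Real.norm_eq_abs]
  exact mul_le_of_le_one_left (abs_nonneg _) (exp_neg_sq_div_le_one x hp.le)

theorem hasDerivAt_integral_exp_neg_sq_div {f : ℝ → ℝ} (hf : IntegrableOn f (Ioi 0))
    (hf' : IntegrableOn (fun p => f p / p) (Ioi 0)) (x : ℝ) :
    HasDerivAt (fun y => ∫ p in Ioi (0 : ℝ), rexp (-y ^ 2 / (4 * p)) * f p)
      (∫ p in Ioi (0 : ℝ), -(x / 2) * (rexp (-x ^ 2 / (4 * p)) * (f p / p))) x := by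
  have hexp (y : ℝ) : ∀ p ∈ Ioi (0 : ℝ), ‖rexp (-y ^ 2 / (4 * p))‖ ≤ 1 := fun p (hp : 0 < p) => by
    rw [Real.norm_eq_abs, Real.abs_exp]
    exact exp_neg_sq_div_le_one y hp.le
  have hmeas (y : ℝ) : AEStronglyMeasurable (fun p : ℝ => rexp (-y ^ 2 / (4 * p)))
      (volume.restrict (Ioi 0)) := Measurable.aestronglyMeasurable (by fun_prop)
  refine (hasDerivAt_integral_of_dominated_loc_of_deriv_le (μ := volume.restrict (Ioi 0))
    (F' := fun y p => -(y / 2) * (rexp (-y ^ 2 / (4 * p)) * (f p / p)))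
    (bound := fun p => (|x| + 1) / 2 * ‖f p / p‖) (Metric.ball_mem_nhds x one_pos)
    (.of_forall fun y => (hmeas y).mul hf.aestronglyMeasurable)
    (hf.bdd_mul (hmeas x) (ae_restrict_of_forall_mem measurableSet_Ioi (hexp x)))
    (((hmeas x).mul hf'.aestronglyMeasurable).const_mul _)
    (ae_restrict_of_forall_mem measurableSet_Ioi fun p hp y hy => ?_)
    (hf'.norm.const_mul _)
    (ae_restrict_of_forall_mem measurableSet_Ioi fun p (hp : 0 < p) y _ => ?_)).2
  · have hy' : |y| ≤ |x| + 1 := by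
      rw [Metric.mem_ball, Real.dist_eq] at hy
      linarith [abs_sub_abs_le_abs_sub y x]
    rw [norm_mul, norm_mul, norm_neg, norm_div, Real.norm_eq_abs y, Real.norm_two]
    gcongr
    exact mul_le_of_le_one_left (norm_nonneg _) (hexp y p hp)
  · have hexponent : HasDerivAt (fun y : ℝ => -y ^ 2 / (4 * p)) (-(2 * y) / (4 * p)) y := by
      simpa using ((hasDerivAt_pow 2 y).neg).div_const (4 * p)
    refine (hexponent.exp.mul_const (f p)).congr_deriv ?_
    field_simp
    ring

section Kernel

variable {m : ℕ} {α lam : Fin (m + 1) → ℝ}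

theorem measurable_uncurry_Sconv (hpos : ∀ j, 0 < α j) (hlt1 : ∀ j, α j < 1) :
    Measurable (Function.uncurry (Sconv m 0 α)) := by
  refine measurable_uncurry_iterConv fun j => ?_
  have hW := measurable_wrightW_zero (hpos j) (hlt1 j)
  simp only [ite_self, Function.uncurry_def]
  fun_prop

theorem exists_abs_Sconv_le (hpos : ∀ j, 0 < α j) (hlt1 : ∀ j, α j < 1) :
    ∃ C ≥ 0, ∀ l : Fin (m + 1) → ℝ, (∀ j, 0 < l j) → ∀ t > 0,
      |Sconv m 0 α l t| ≤ C * ∑ j, wrightMajorant (α j) (l j) t := by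
  choose A hA hwright using fun j => exists_abs_wrightW_neg_le (hpos j) (hlt1 j)
  have hM (j) : 0 ≤ (α j)⁻¹ * (π / 2) := mul_nonneg (inv_nonneg.2 (hpos j).le) (by positivity)
  have hB : 0 ≤ ∑ j, A j := Finset.sum_nonneg fun j _ => hA j
  obtain ⟨C, hC, hconv⟩ := IsConvMajorant.exists_abs_iterConv_le
    (mul_nonneg hB (Finset.sum_nonneg fun j _ => hM j)) zero_le_four m
  refine ⟨C * ∑ j, A j, mul_nonneg hC hB, fun l hl t ht => ?_⟩
  rw [mul_assoc, Finset.mul_sum]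
  refine hconv _ (fun j t => (∑ j, A j) * wrightMajorant (α j) (l j) t)
    (fun j => ((isConvMajorant_wrightMajorant (hpos j) (hlt1 j).le (hl j)).mono
      (Finset.single_le_sum (fun i _ => hM i) (Finset.mem_univ j))).const_mul hB)
    (fun j t ht => ?_) t ht
  have hz : 0 < l j * t ^ (-(α j)) := mul_pos (hl j) (Real.rpow_pos_of_pos ht _)
  simp only [ite_self, zero_sub, Real.rpow_neg_one, neg_mul]
  rw [abs_mul, abs_of_pos (inv_pos.2 ht), wrightMajorant, mul_left_comm (∑ j, A j)]
  gcongr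
  refine (hwright j _ hz).trans ?_
  gcongr
  exact Finset.single_le_sum (fun i _ => hA i) (Finset.mem_univ j)

theorem exists_integral_abs_rpow_mul_Sconv_le (hpos : ∀ j, 0 < α j) (hlt1 : ∀ j, α j < 1)
    {s : ℝ} (hs : -2 < s) (hs0 : s < 0) :
    ∃ D ≥ 0, ∀ lam : Fin (m + 1) → ℝ, (∀ j, 0 < lam j) → ∀ t > 0,
      IntegrableOn (fun p => p ^ s * Sconv m 0 α (fun j => lam j * p) t) (Ioi 0) ∧
      ∫ p in Ioi (0 : ℝ), |p ^ s * Sconv m 0 α (fun j => lam j * p) t| ≤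
        D * ∑ j, t⁻¹ * (lam j * t ^ (-(α j))) ^ (-s - 1) := by
  obtain ⟨C, hC, hS⟩ := exists_abs_Sconv_le hpos hlt1
  refine ⟨C * ∫ q in Ioi (0 : ℝ), q ^ (s + 1) * (1 + q ^ 2)⁻¹,
    mul_nonneg hC (setIntegral_nonneg measurableSet_Ioi fun q (hq : 0 < q) => by positivity),
    fun lam hlam t ht => ?_⟩
  have hterm (j) := integrableOn_rpow_mul_wrightMajorant hs hs0 (α j) (hlam j) ht
  have hmajorant : IntegrableOn
      (fun p => C * ∑ j, p ^ s * wrightMajorant (α j) (lam j * p) t) (Ioi 0) :=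
    (integrable_finsetSum _ fun j _ => hterm j).const_mul C
  have hle : ∀ p ∈ Ioi (0 : ℝ), |p ^ s * Sconv m 0 α (fun j => lam j * p) t| ≤
      C * ∑ j, p ^ s * wrightMajorant (α j) (lam j * p) t := fun p (hp : 0 < p) => by
    rw [abs_mul, abs_of_pos (Real.rpow_pos_of_pos hp s), ← Finset.mul_sum, mul_left_comm]
    exact mul_le_mul_of_nonneg_left (hS _ (fun j => mul_pos (hlam j) hp) t ht) (by positivity)
  have hmeas : Measurable fun p => Sconv m 0 α (fun j => lam j * p) t :=
    (measurable_uncurry_Sconv hpos hlt1).comp (f := fun p => (fun j => lam j * p, t))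
      (by fun_prop)
  have hint : IntegrableOn (fun p => p ^ s * Sconv m 0 α (fun j => lam j * p) t) (Ioi 0) :=
    Integrable.mono' hmajorant (Measurable.aestronglyMeasurable (by fun_prop))
      (ae_restrict_of_forall_mem measurableSet_Ioi hle)
  refine ⟨hint, ?_⟩
  calc ∫ p in Ioi (0 : ℝ), |p ^ s * Sconv m 0 α (fun j => lam j * p) t|
      ≤ ∫ p in Ioi (0 : ℝ), C * ∑ j, p ^ s * wrightMajorant (α j) (lam j * p) t :=
        setIntegral_mono_on hint.abs hmajorant measurableSet_Ioi hle
    _ = _ := by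
        simp only [MeasureTheory.integral_const_mul,
          MeasureTheory.integral_finsetSum _ fun j _ => hterm j,
          integral_rpow_mul_wrightMajorant s _ (hlam _) ht, ← Finset.sum_mul]
        ring

theorem hasDerivAt_kerE (hpos : ∀ j, 0 < α j) (hlt1 : ∀ j, α j < 1) (hlam : ∀ j, 0 < lam j)
    {t : ℝ} (ht : 0 < t) (x : ℝ) :
    HasDerivAt (fun y => kerE m α lam y t) ((4 * π) ^ (-(1 / 2 : ℝ)) * ∫ p in Ioi (0 : ℝ),
      -(x / 2) * (rexp (-x ^ 2 / (4 * p)) *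
        (p ^ (-(3 / 2) : ℝ) * Sconv m 0 α (fun j => lam j * p) t))) x := by
  obtain ⟨_, -, hhalf⟩ := exists_integral_abs_rpow_mul_Sconv_le hpos hlt1 (s := -(1 / 2))
    (by norm_num) (by norm_num)
  obtain ⟨_, -, hthree⟩ := exists_integral_abs_rpow_mul_Sconv_le hpos hlt1 (s := -(3 / 2))
    (by norm_num) (by norm_num)
  have hdiv : ∀ p ∈ Ioi (0 : ℝ), p ^ (-(3 / 2) : ℝ) * Sconv m 0 α (fun j => lam j * p) t =
      p ^ (-(1 / 2) : ℝ) * Sconv m 0 α (fun j => lam j * p) t / p := fun p (hp : 0 < p) => by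
    rw [mul_div_right_comm, ← Real.rpow_sub_one hp.ne']
    norm_num
  have hkerE (y : ℝ) : kerE m α lam y t = (4 * π) ^ (-(1 / 2 : ℝ)) * ∫ p in Ioi (0 : ℝ),
      rexp (-y ^ 2 / (4 * p)) * (p ^ (-(1 / 2) : ℝ) * Sconv m 0 α (fun j => lam j * p) t) := by
    simp only [kerE, Gam1, sq_abs, mul_left_comm (rexp _), mul_assoc]
  simp only [hkerE]
  refine ((hasDerivAt_integral_exp_neg_sq_div (hhalf lam hlam t ht).1
    ((hthree lam hlam t ht).1.congr_fun hdiv measurableSet_Ioi) x).const_mul _).congr_deriv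
      (congrArg _ (setIntegral_congr_fun measurableSet_Ioi fun p hp => ?_))
  rw [hdiv p hp]

theorem measurable_indicator_kerEx (hpos : ∀ j, 0 < α j) (hlt1 : ∀ j, α j < 1)
    (hlam : ∀ j, 0 < lam j) :
    Measurable ({q : ℝ × ℝ | 0 < q.2}.indicator fun q => kerEx m α lam q.1 q.2) := by
  have hS : Measurable fun q : (ℝ × ℝ) × ℝ => Sconv m 0 α (fun j => lam j * q.2) q.1.2 :=
    (measurable_uncurry_Sconv hpos hlt1).comp
      (f := fun q : (ℝ × ℝ) × ℝ => (fun j => lam j * q.2, q.1.2)) (by fun_prop)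
  have hintegrand : Measurable fun q : (ℝ × ℝ) × ℝ => -(q.1.1 / 2) *
      (rexp (-q.1.1 ^ 2 / (4 * q.2)) *
        (q.2 ^ (-(3 / 2) : ℝ) * Sconv m 0 α (fun j => lam j * q.2) q.1.2)) := by
    fun_prop
  have hintegral := hintegrand.stronglyMeasurable.integral_prod_right'
    (ν := volume.restrict (Ioi 0)) |>.measurable.const_mul ((4 * π) ^ (-(1 / 2 : ℝ)))
  have hdomain : MeasurableSet {q : ℝ × ℝ | 0 < q.2} :=
    measurableSet_lt measurable_const measurable_snd
  convert hintegral.indicator hdomain using 1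
  exact indicator_congr fun q hq => (hasDerivAt_kerE hpos hlt1 hlam hq q.1).deriv

theorem exists_abs_kerEx_le (hpos : ∀ j, 0 < α j) (hlt1 : ∀ j, α j < 1) (hlam : ∀ j, 0 < lam j) :
    ∃ D ≥ 0, ∀ t > 0, ∀ x : ℝ, |kerEx m α lam x t| ≤
      D * (∑ j, t⁻¹ * (lam j * t ^ (-(α j))) ^ (1 / 2 : ℝ)) * |x| := by
  obtain ⟨D, hD, hS⟩ := exists_integral_abs_rpow_mul_Sconv_le hpos hlt1 (s := -(3 / 2))
    (by norm_num) (by norm_num)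
  refine ⟨(4 * π) ^ (-(1 / 2 : ℝ)) * D / 2, by positivity, fun t ht x => ?_⟩
  obtain ⟨hint, hle⟩ := hS lam hlam t ht
  have hexponent : -(-(3 / 2 : ℝ)) - 1 = 1 / 2 := by norm_num
  rw [hexponent] at hle
  rw [kerEx, (hasDerivAt_kerE hpos hlt1 hlam ht x).deriv, MeasureTheory.integral_const_mul,
    abs_mul, abs_mul, abs_neg, abs_div, abs_two, abs_of_pos (by positivity)]
  calc _ ≤ (4 * π) ^ (-(1 / 2 : ℝ)) * (|x| / 2 *
        (D * ∑ j, t⁻¹ * (lam j * t ^ (-(α j))) ^ (1 / 2 : ℝ))) := by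
        gcongr
        exact (abs_integral_exp_neg_sq_div_mul_le hint x).trans hle
    _ = _ := by ring

theorem exists_abs_kerEx_le_rpow (hpos : ∀ j, 0 < α j) (hlt1 : ∀ j, α j < 1)
    (hlam : ∀ j, 0 < lam j) {a : ℝ} (ha : ∀ j, α j ≤ a) {T : ℝ} (hT : 0 < T) :
    ∃ D ≥ 0, ∀ t ∈ Ioc 0 T, ∀ x : ℝ, |kerEx m α lam x t| ≤ D * t ^ (-a / 2 - 1) * |x| := by
  obtain ⟨D, hD, hker⟩ := exists_abs_kerEx_le hpos hlt1 hlam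
  refine ⟨D * ∑ j, lam j ^ (1 / 2 : ℝ) * T ^ ((a - α j) / 2),
    mul_nonneg hD (Finset.sum_nonneg fun j _ => by have := hlam j; positivity),
    fun t ht x => (hker t ht.1 x).trans ?_⟩
  have ht0 : 0 < t := ht.1
  rw [mul_assoc D (∑ j, _) (t ^ _), Finset.sum_mul]
  refine mul_le_mul_of_nonneg_right (mul_le_mul_of_nonneg_left
    (Finset.sum_le_sum fun j _ => ?_) hD) (abs_nonneg x)
  have hlamj := hlam j
  have hexp : 0 ≤ (a - α j) / 2 := by linarith [ha j]
  calc t⁻¹ * (lam j * t ^ (-(α j))) ^ (1 / 2 : ℝ)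
      = lam j ^ (1 / 2 : ℝ) * t ^ ((a - α j) / 2) * t ^ (-a / 2 - 1) := by
        rw [Real.mul_rpow hlamj.le (by positivity), ← Real.rpow_mul ht0.le, mul_assoc,
          ← Real.rpow_add ht0, ← Real.rpow_neg_one, mul_left_comm, ← Real.rpow_add ht0]
        ring_nf
    _ ≤ lam j ^ (1 / 2 : ℝ) * T ^ ((a - α j) / 2) * t ^ (-a / 2 - 1) := by
        have := ht.2
        gcongr

theorem aestronglyMeasurable_kerEx_trace (hpos : ∀ j, 0 < α j) (hlt1 : ∀ j, α j < 1)
    (hlam : ∀ j, 0 < lam j) {s : ℝ → ℝ} {S : Set ℝ} (hS : MeasurableSet S) (hs : ContinuousOn s S)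
    (c : ℝ) {t : ℝ} (hSt : S ⊆ Iio t) :
    AEStronglyMeasurable (fun τ => kerEx m α lam (c - s τ) (t - τ)) (volume.restrict S) := by
  have hcomp : AEMeasurable (fun τ => (c - s τ, t - τ)) (volume.restrict S) :=
    ((hs.aemeasurable hS).const_sub c).prodMk (by fun_prop)
  refine ((measurable_indicator_kerEx hpos hlt1 hlam).comp_aemeasurable
    hcomp).aestronglyMeasurable.congr ?_
  filter_upwards [ae_restrict_mem hS] with τ hτ
  exact indicator_of_mem (show 0 < t - τ from sub_pos.2 (hSt hτ)) _

end Kernel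

/-! ### Weakly singular integrals along a Hölder curve -/

theorem intervalIntegrable_sub_rpow {γ : ℝ} (hγ : 0 < γ) (t δ : ℝ) :
    IntervalIntegrable (fun τ => (t - τ) ^ (γ - 1)) volume (t - δ) t := by
  simpa using (intervalIntegral.intervalIntegrable_rpow' (a := δ) (b := 0)
    (by linarith : -1 < γ - 1)).comp_sub_left t

theorem integral_sub_rpow {γ : ℝ} (hγ : 0 < γ) (t δ : ℝ) :
    ∫ τ in (t - δ)..t, (t - τ) ^ (γ - 1) = δ ^ γ / γ := by
  rw [intervalIntegral.integral_comp_sub_left (fun u : ℝ => u ^ (γ - 1)), sub_self, sub_sub_cancel,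
    integral_rpow (Or.inl (by linarith)), sub_add_cancel, Real.zero_rpow hγ.ne', sub_zero]

theorem continuousOn_of_abs_sub_le_rpow {s : ℝ → ℝ} {S : Set ℝ} {L β : ℝ} (hβ : 0 < β)
    (hs : ∀ t ∈ S, ∀ τ ∈ S, |s t - s τ| ≤ L * |t - τ| ^ β) : ContinuousOn s S := by
  intro τ hτ
  have hlim : Tendsto (fun t => L * |t - τ| ^ β) (𝓝[S] τ) (𝓝 0) := by
    have hcont : Continuous fun t : ℝ => L * |t - τ| ^ β := by
      have := Real.continuous_rpow_const hβ.le
      fun_prop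
    simpa [hβ.ne'] using (hcont.tendsto τ).mono_left nhdsWithin_le_nhds
  refine tendsto_iff_dist_tendsto_zero.2 (squeeze_zero' (.of_forall fun _ => dist_nonneg) ?_ hlim)
  filter_upwards [self_mem_nhdsWithin] with t ht using hs t ht τ hτ

theorem intervalIntegrable_and_integral_abs_le_of_abs_le_sub_rpow {f : ℝ → ℝ} {t δ c γ : ℝ}
    (hδ : 0 ≤ δ) (hγ : 0 < γ) (hf : AEStronglyMeasurable f (volume.restrict (Ioo (t - δ) t)))
    (hbound : ∀ τ ∈ Ioo (t - δ) t, |f τ| ≤ c * (t - τ) ^ (γ - 1)) :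
    IntervalIntegrable f volume (t - δ) t ∧ ∫ τ in (t - δ)..t, |f τ| ≤ c / γ * δ ^ γ := by
  have hδt : t - δ ≤ t := sub_le_self t hδ
  have hdom := (intervalIntegrable_sub_rpow hγ t δ).const_mul c
  have hint : IntervalIntegrable f volume (t - δ) t := by
    rw [intervalIntegrable_iff_integrableOn_Ioo_of_le hδt] at hdom ⊢
    exact Integrable.mono' hdom hf (ae_restrict_of_forall_mem measurableSet_Ioo hbound)
  refine ⟨hint, ?_⟩
  calc ∫ τ in (t - δ)..t, |f τ|
      ≤ ∫ τ in (t - δ)..t, c * (t - τ) ^ (γ - 1) :=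
        intervalIntegral.integral_mono_on_of_le_Ioo hδt hint.abs hdom hbound
    _ = c / γ * δ ^ γ := by
        rw [intervalIntegral.integral_const_mul, integral_sub_rpow hγ]
        ring

theorem kerEx_boundary_trace_bound_general {m : ℕ} {α lam : Fin (m + 1) → ℝ}
    (hpos : ∀ j, 0 < α j) (hlt1 : ∀ j, α j < 1) (hlam : ∀ j, 0 < lam j) {a : ℝ}
    (ha : ∀ j, α j ≤ a) {T : ℝ} (hT : 0 < T) {s : ℝ → ℝ} {β : ℝ} (hβ : a / 2 < β) {L : ℝ}
    (hs : ∀ t ∈ Icc 0 T, ∀ τ ∈ Icc 0 T, |s t - s τ| ≤ L * |t - τ| ^ β) :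
    ∃ C > 0, ∀ t ∈ Ioc 0 T, ∀ δ ∈ Ioo 0 t,
      IntervalIntegrable (fun τ => kerEx m α lam (s t - s τ) (t - τ)) volume (t - δ) t ∧
      ∫ τ in (t - δ)..t, |kerEx m α lam (s t - s τ) (t - τ)| ≤ C * δ ^ (β - a / 2) := by
  obtain ⟨D, hD, hker⟩ := exists_abs_kerEx_le_rpow hpos hlt1 hlam ha hT
  have hβ0 : 0 < β := by linarith [hpos 0, ha 0]
  have hγ : 0 < β - a / 2 := sub_pos.2 hβ
  have hcont := continuousOn_of_abs_sub_le_rpow hβ0 hs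
  refine ⟨|D * L| / (β - a / 2) + 1, by positivity, fun t ht δ hδ => ?_⟩
  have hmem : Ioo (t - δ) t ⊆ Icc 0 T := fun τ hτ =>
    ⟨(sub_nonneg.2 hδ.2.le).trans hτ.1.le, hτ.2.le.trans ht.2⟩
  have hbound : ∀ τ ∈ Ioo (t - δ) t, |kerEx m α lam (s t - s τ) (t - τ)| ≤
      D * L * (t - τ) ^ (β - a / 2 - 1) := fun τ hτ => by
    have htτ : 0 < t - τ := sub_pos.2 hτ.2
    calc |kerEx m α lam (s t - s τ) (t - τ)|
        ≤ D * (t - τ) ^ (-a / 2 - 1) * |s t - s τ| :=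
          hker _ ⟨htτ, by linarith [ht.2, (hmem hτ).1]⟩ _
      _ ≤ D * (t - τ) ^ (-a / 2 - 1) * (L * |t - τ| ^ β) := by
          gcongr
          exact hs t ⟨ht.1.le, ht.2⟩ τ (hmem hτ)
      _ = D * L * (t - τ) ^ (β - a / 2 - 1) := by
          rw [abs_of_pos htτ, mul_mul_mul_comm, ← Real.rpow_add htτ]
          ring_nf
  obtain ⟨hint, hle⟩ := intervalIntegrable_and_integral_abs_le_of_abs_le_sub_rpow hδ.1.le hγ
    (aestronglyMeasurable_kerEx_trace hpos hlt1 hlam measurableSet_Ioo (hcont.mono hmem) (s t)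
      fun τ hτ => hτ.2) hbound
  refine ⟨hint, hle.trans (mul_le_mul_of_nonneg_right ?_ (Real.rpow_nonneg hδ.1.le _))⟩
  calc D * L / (β - a / 2) ≤ |D * L| / (β - a / 2) := by gcongr; exact le_abs_self _
    _ ≤ |D * L| / (β - a / 2) + 1 := le_add_of_nonneg_right zero_le_one

/-- Hölder-in-`δ` bound for the boundary trace of `E_x`:
`∫_{t-δ}^t |E_x(s(t) - s(τ), t-τ)| dτ ≤ C δ^{β - α_m/2}`. -/
theorem kerEx_boundary_trace_bound
    (m : ℕ) (α lam : Fin (m + 1) → ℝ)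
    (hmono : StrictMono α) (hpos : ∀ j, 0 < α j) (hlt1 : ∀ j, α j < 1)
    (hlam : ∀ j, 0 < lam j)
    (T : ℝ) (hT : 0 < T) (s : ℝ → ℝ)
    (β : ℝ) (hβ : α (Fin.last m) / 2 < β)
    (hs : ∀ t ∈ Set.Icc (0:ℝ) T, ∀ τ ∈ Set.Icc (0:ℝ) T, |s t - s τ| ≤ |t - τ| ^ β) :
    ∃ C > (0:ℝ), ∀ t ∈ Set.Ioc (0:ℝ) T, ∀ δ ∈ Set.Ioo (0:ℝ) t,
      ∫ τ in (t - δ)..t, |kerEx m α lam (s t - s τ) (t - τ)| ≤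
        C * δ ^ (β - α (Fin.last m) / 2) := by
  obtain ⟨C, hC, hbound⟩ := kerEx_boundary_trace_bound_general hpos hlt1 hlam
    (fun j => hmono.monotone (Fin.le_last j)) hT hβ (L := 1) (by simpa only [one_mul] using hs)
  exact ⟨C, hC, fun t ht δ hδ => (hbound t ht δ hδ).2⟩
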